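/- For every deletion probability p ∈ [0,1) there exists a constant C > 0 (depending only on p) such that for every integer n ≥ 2, setting k := ⌈2·n^{1/5}⌉, for all distinct strings x, y ∈ {0,1}^n the k-mer density maps satisfy ‖K_x − K_y‖₁ ≥ exp(−C·n^{1/5}·(log n)^5). -/

import Mathlib

open Finset

/-- Indicator (as a Prop) that the `k`-mer `w` occurs in `x` starting at position `j`,
i.e. `x_{j+t} = w_t` for all in-range `t`. -/
def occAt {n k : ℕ} (x : Fin n → Bool) (w : Fin k → Bool) (j : ℕ) : Prop :=
  ∀ t : Fin k, ∀ h : j + t.1 < n, x ⟨j + t.1, h⟩ = w t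

open Classical in
/-- The real-valued indicator `1[x[j : j+k-1] = w]`. -/
noncomputable def indAt {n k : ℕ} (x : Fin n → Bool) (w : Fin k → Bool) (j : ℕ) : ℝ :=
  if occAt x w j then 1 else 0

/-- The `k`-mer density map entry
`K_{w,x}[i] = ∑_{j=0}^{n-k} C(j,i) p^{j-i} (1-p)^i 1[x[j:j+k-1]=w]`. -/
noncomputable def Kmap (p : ℝ) {n k : ℕ} (x : Fin n → Bool) (w : Fin k → Bool) (i : ℕ) : ℝ :=
  ∑ j ∈ Finset.range (n - k + 1),
    (j.choose i : ℝ) * p ^ (j - i) * (1 - p) ^ i * indAt x w j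

/-- The ℓ₁ distance between the `k`-mer density maps of `x` and `y`. -/
noncomputable def kmerL1 (p : ℝ) {n : ℕ} (k : ℕ) (x y : Fin n → Bool) : ℝ :=
  ∑ w : Fin k → Bool, ∑ i ∈ Finset.range n, |Kmap p x w i - Kmap p y w i|

/-!
For a `k`-mer `w`, the numbers `K_{w,x}[i] - K_{w,y}[i]` are the coefficients in `u` of the
generating function of the indicator differences of `w`, evaluated at `z = p + (1 - p) u`. Hence
that polynomial is at most `e^{O(n^{1/5})} ‖K_x - K_y‖₁` on the arc of the unit circle of length
about `n^{-2/5}` around `1`.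

Let `w` be the `k`-mer of `x` ending at the first difference of `x` and `y`. After exchanging `x`
and `y` if necessary, `w` has no short period, so its occurrences are sparse and the polynomial,
once its leading power of `z` is removed, is at least `1 / n` at the real point `1 - δ` with `δ =
4 log n / n^{1/5}`. A disc automorphism moves `1 - δ` to `0` and stretches the arc by `1 / δ`; the
maximum principle for a product over `M ≈ n^{1/5} log n` rotations then bounds the polynomial on
the arc from below. Bounded `n`, and strings that differ before position `k - 1`, are treated on
the circle of radius `(1 + p) / 2`.
-/

section TwoConstants

open Metric Complex

variable {G : ℂ → ℂ} {B ε r : ℝ} {M : ℕ} {w : ℂ}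

lemma exists_nthRoot_norm_mul_sub_one_le (hM : 0 < M) (hw : ‖w‖ = 1) :
    ∃ ξ ∈ Polynomial.nthRootsFinset M (1 : ℂ), ‖w * ξ - 1‖ ≤ Real.pi / M := by
  have hM' : (M : ℂ) ≠ 0 := Nat.cast_ne_zero.2 hM.ne'
  set f : ℤ := round (w.arg * M / (2 * Real.pi))
  set s : ℝ := (w.arg * M / (2 * Real.pi) - f) * (2 * Real.pi / M) with hs
  refine ⟨exp (-f * (2 * Real.pi * I / M)), ?_, ?_⟩
  · rw [Polynomial.mem_nthRootsFinset hM, ← exp_nat_mul, exp_eq_one_iff]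
    refine ⟨-f, ?_⟩
    push_cast
    field_simp
  · have hrot : w * exp (-f * (2 * Real.pi * I / M)) = exp (I * s) := by
      conv_lhs => rw [← norm_mul_exp_arg_mul_I w, hw, ofReal_one, one_mul, ← exp_add]
      congr 1
      rw [hs]
      push_cast
      field_simp
      ring
    calc ‖w * exp (-f * (2 * Real.pi * I / M)) - 1‖ = ‖exp (I * s) - 1‖ := by rw [hrot]
      _ ≤ |s| := Real.norm_exp_I_mul_ofReal_sub_one_le
      _ = |w.arg * M / (2 * Real.pi) - f| * (2 * Real.pi / M) := by
        rw [hs, abs_mul, abs_of_pos (a := 2 * Real.pi / M) (by positivity)]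
      _ ≤ 1 / 2 * (2 * Real.pi / M) := by gcongr; exact abs_sub_round _
      _ = Real.pi / M := by ring

-- The maximum principle is applied to `w ↦ ∏ G (w ξ)` over the `M`-th roots of unity `ξ`: on the
-- unit circle at least one of the `M` factors is evaluated close to `1`.
lemma norm_apply_zero_pow_le_of_norm_le_near_one (hG : DiffContOnCl ℂ G (ball 0 1)) (hM : 0 < M)
    (hB : ∀ w, ‖w‖ = 1 → ‖G w‖ ≤ B)
    (hε : ∀ w, ‖w‖ = 1 → ‖w - 1‖ ≤ Real.pi / M → ‖G w‖ ≤ ε) :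
    ‖G 0‖ ^ M ≤ ε * B ^ (M - 1) := by
  set roots := Polynomial.nthRootsFinset M (1 : ℂ)
  have hcard : #roots = M := (isPrimitiveRoot_exp M hM.ne').card_nthRootsFinset
  have norm_mul_root : ∀ ξ ∈ roots, ∀ w : ℂ, ‖w * ξ‖ = ‖w‖ := fun ξ hξ w ↦ by
    rw [norm_mul, norm_eq_one_of_pow_eq_one ((Polynomial.mem_nthRootsFinset hM 1).1 hξ) hM.ne',
      mul_one]
  have hrot : ∀ ξ ∈ roots, DiffContOnCl ℂ (fun w ↦ G (w * ξ)) (ball 0 1) := fun ξ hξ ↦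
    hG.comp (g := fun w ↦ w * ξ) (Differentiable.diffContOnCl (by fun_prop))
      fun w hw ↦ by rwa [mem_ball_zero_iff, norm_mul_root ξ hξ, ← mem_ball_zero_iff]
  have hprod : DiffContOnCl ℂ (fun w ↦ ∏ ξ ∈ roots, G (w * ξ)) (ball 0 1) :=
    ⟨DifferentiableOn.fun_finsetProd fun ξ hξ ↦ (hrot ξ hξ).1,
      continuousOn_finsetProd _ fun ξ hξ ↦ (hrot ξ hξ).2⟩
  have hcircle : ∀ w ∈ frontier (ball (0 : ℂ) 1), ‖∏ ξ ∈ roots, G (w * ξ)‖ ≤ ε * B ^ (M - 1) := by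
    intro w hw
    replace hw : ‖w‖ = 1 := by simpa [frontier_ball (0 : ℂ) one_ne_zero] using hw
    obtain ⟨ξ, hξ, hwξ⟩ := exists_nthRoot_norm_mul_sub_one_le hM hw
    have hnear : ‖G (w * ξ)‖ ≤ ε := hε _ ((norm_mul_root ξ hξ w).trans hw) hwξ
    have hrest : ∏ η ∈ roots.erase ξ, ‖G (w * η)‖ ≤ B ^ (M - 1) := by
      rw [← hcard, ← card_erase_of_mem hξ, ← prod_const]
      exact prod_le_prod (fun _ _ ↦ norm_nonneg _)
        fun η hη ↦ hB _ ((norm_mul_root η (mem_of_mem_erase hη) w).trans hw)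
    rw [norm_prod, ← mul_prod_erase _ _ hξ]
    exact mul_le_mul hnear hrest (prod_nonneg fun _ _ ↦ norm_nonneg _)
      ((norm_nonneg _).trans hnear)
  simpa [hcard] using norm_le_of_forall_mem_frontier_norm_le isBounded_ball hprod hcircle
    (subset_closure (mem_ball_self one_pos))

/-- The automorphism of the unit disc that fixes `1` and maps `0` to `r`. -/
noncomputable def discAut (r : ℝ) (w : ℂ) : ℂ := (w + r) / (1 + r * w)

lemma norm_one_add_mul_sq_sub_norm_add_sq (r : ℝ) (w : ℂ) :
    ‖1 + r * w‖ ^ 2 - ‖w + r‖ ^ 2 = (1 - r ^ 2) * (1 - ‖w‖ ^ 2) := by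
  simp only [Complex.sq_norm, normSq_apply, add_re, add_im, mul_re, mul_im, one_re, one_im,
    ofReal_re, ofReal_im]
  ring

lemma one_add_ofReal_mul_ne_zero (hr : |r| < 1) (hw : ‖w‖ ≤ 1) : 1 + r * w ≠ 0 := by
  intro h
  have hone : ‖(r : ℂ) * w‖ = 1 := by rw [eq_neg_of_add_eq_zero_right h, norm_neg, norm_one]
  rw [norm_mul, norm_real, Real.norm_eq_abs] at hone
  exact (mul_lt_one_of_nonneg_of_lt_one_left (abs_nonneg r) hr hw).ne hone

lemma norm_discAut_eq_one (hr : |r| < 1) (hw : ‖w‖ = 1) : ‖discAut r w‖ = 1 := by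
  have h := norm_one_add_mul_sq_sub_norm_add_sq r w
  rw [hw, one_pow, sub_self, mul_zero, sub_eq_zero, sq_eq_sq₀ (norm_nonneg _) (norm_nonneg _)] at h
  rw [discAut, norm_div, ← h, div_self (norm_ne_zero_iff.2 (one_add_ofReal_mul_ne_zero hr hw.le))]

lemma norm_discAut_lt_one (hr : |r| < 1) (hw : ‖w‖ < 1) : ‖discAut r w‖ < 1 := by
  have h := norm_one_add_mul_sq_sub_norm_add_sq r w
  have hpos : 0 < (1 - r ^ 2) * (1 - ‖w‖ ^ 2) :=
    mul_pos (sub_pos.2 ((sq_lt_one_iff_abs_lt_one r).2 hr))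
      (sub_pos.2 (pow_lt_one₀ (norm_nonneg w) hw two_ne_zero))
  rw [discAut, norm_div, div_lt_one (norm_pos_iff.2 (one_add_ofReal_mul_ne_zero hr hw.le))]
  exact lt_of_pow_lt_pow_left₀ 2 (norm_nonneg _) (by linarith)

lemma diffContOnCl_discAut (hr : |r| < 1) : DiffContOnCl ℂ (discAut r) (ball 0 1) := by
  refine DifferentiableOn.diffContOnCl (DifferentiableOn.div (by fun_prop) (by fun_prop) ?_)
  intro w hw
  rw [closure_ball _ one_ne_zero, mem_closedBall_zero_iff] at hw
  exact one_add_ofReal_mul_ne_zero hr hw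

lemma norm_discAut_sub_one_le (hr₀ : 0 ≤ r) (hr₁ : r ≤ 1) (hw : ‖w - 1‖ ≤ 1) :
    ‖discAut r w - 1‖ ≤ (1 - r) * ‖w - 1‖ := by
  have hre : 0 ≤ w.re := by
    have h := neg_le_of_abs_le ((abs_re_le_norm (w - 1)).trans hw)
    rw [sub_re, one_re] at h
    linarith
  have hden : 1 ≤ ‖1 + r * w‖ := by
    refine le_trans ?_ (re_le_norm _)
    rw [add_re, one_re, re_ofReal_mul]
    nlinarith
  have hsub : discAut r w - 1 = ((1 - r : ℝ) : ℂ) * (w - 1) / (1 + r * w) := by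
    rw [discAut, div_sub_one (norm_pos_iff.1 (one_pos.trans_le hden))]
    push_cast
    ring
  rw [hsub, norm_div, norm_mul, norm_real, Real.norm_of_nonneg (sub_nonneg.2 hr₁)]
  exact div_le_self (mul_nonneg (sub_nonneg.2 hr₁) (norm_nonneg _)) hden

lemma norm_apply_ofReal_pow_le_of_norm_le_near_one (hG : DiffContOnCl ℂ G (ball 0 1)) (hM : 4 ≤ M)
    (hr₀ : 0 ≤ r) (hr₁ : r < 1) (hB : ∀ z, ‖z‖ = 1 → ‖G z‖ ≤ B)
    (hε : ∀ z, ‖z‖ = 1 → ‖z - 1‖ ≤ (1 - r) * (Real.pi / M) → ‖G z‖ ≤ ε) :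
    ‖G r‖ ^ M ≤ ε * B ^ (M - 1) := by
  have hr : |r| < 1 := by rwa [abs_of_nonneg hr₀]
  have hM' : (4 : ℝ) ≤ M := by exact_mod_cast hM
  have harc : Real.pi / M ≤ 1 := (div_le_one (by linarith)).2 (Real.pi_le_four.trans hM')
  have hcomp : DiffContOnCl ℂ (G ∘ discAut r) (ball 0 1) :=
    hG.comp (diffContOnCl_discAut hr) fun w hw ↦ by
      rw [mem_ball_zero_iff] at hw ⊢
      exact norm_discAut_lt_one hr hw
  have key := norm_apply_zero_pow_le_of_norm_le_near_one hcomp (B := B) (ε := ε) (by omega : 0 < M)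
    (fun w hw ↦ hB _ (norm_discAut_eq_one hr hw))
    fun w hw hw₁ ↦ hε _ (norm_discAut_eq_one hr hw) <|
      (norm_discAut_sub_one_le hr₀ hr₁.le (hw₁.trans harc)).trans <|
        mul_le_mul_of_nonneg_left hw₁ (sub_nonneg.2 hr₁.le)
  simpa [discAut] using key

end TwoConstants

section Periods

variable {α : Type*} {k a b : ℕ}

lemma hasPeriod_ofFn_iff {w : Fin k → α} :
    (List.ofFn w).HasPeriod a ↔ ∀ s t : Fin k, (t : ℕ) = s + a → w s = w t := by
  rw [List.hasPeriod_iff_getElem?, List.length_ofFn]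
  constructor
  · intro h s t hst
    have hs := h s (by omega)
    rw [← hst] at hs
    simpa using hs
  · intro h i hi
    have hia : i + a < k := by omega
    have hi' : i < k := by omega
    simpa [hia, hi'] using h ⟨i, hi'⟩ ⟨i + a, hia⟩ rfl

lemma eq_of_hasPeriod_of_forall_ne_last {u v : Fin k → α} (ha : 0 < a) (hb : 0 < b)
    (hab : a + b < k) (hu : (List.ofFn u).HasPeriod a) (hv : (List.ofFn v).HasPeriod b)
    (huv : ∀ t : Fin k, t + 1 < k → u t = v t) : u = v := by
  rw [hasPeriod_ofFn_iff] at hu hv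
  funext t
  by_cases ht : t + 1 < k
  · exact huv t ht
  have hta : t - a < k := by omega
  have htb : t - b < k := by omega
  have htab : t - (a + b) < k := by omega
  calc u t = u ⟨t - a, hta⟩ := (hu _ _ (by simp; omega)).symm
    _ = v ⟨t - a, hta⟩ := huv _ (by simp; omega)
    _ = v ⟨t - (a + b), htab⟩ := (hv _ _ (by simp; omega)).symm
    _ = u ⟨t - (a + b), htab⟩ := (huv _ (by simp; omega)).symm
    _ = u ⟨t - b, htb⟩ := hu _ _ (by simp; omega)
    _ = v ⟨t - b, htb⟩ := huv _ (by simp; omega)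
    _ = v t := hv _ _ (by simp; omega)

end Periods

section Occurrences

variable {n k : ℕ} {x y : Fin n → Bool} {w : Fin k → Bool} {i j m : ℕ} {d : Fin n}

/-- The `k`-mer of `x` starting at position `m`, continued by `false` beyond the end of `x`. -/
def kmerAt (x : Fin n → Bool) (k m : ℕ) (t : Fin k) : Bool :=
  if h : m + t < n then x ⟨m + t, h⟩ else false

lemma occAt_kmerAt (x : Fin n → Bool) (k m : ℕ) : occAt x (kmerAt x k m) m :=
  fun _ h ↦ by rw [kmerAt, dif_pos h]

lemma occAt_congr_of_add_le (hxy : ∀ i < d, x i = y i) (hj : j + k ≤ d) :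
    occAt x w j ↔ occAt y w j :=
  forall_congr' fun _ ↦ forall_congr' fun _ ↦ by rw [hxy _ (Fin.lt_def.2 (by simp; omega))]

lemma not_occAt_kmerAt_of_ne (hd : x d ≠ y d) (hmd : m ≤ d) (hdm : d < m + k) :
    ¬ occAt y (kmerAt x k m) m := by
  intro h
  have hy := h ⟨d - m, by omega⟩ (by simp [Nat.add_sub_cancel' hmd])
  simp only [kmerAt, Nat.add_sub_cancel' hmd, d.isLt, dite_true] at hy
  exact hd hy.symm

lemma kmerAt_eq_of_add_lt (hxy : ∀ i < d, x i = y i) {t : Fin k} (ht : m + t < d) :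
    kmerAt x k m t = kmerAt y k m t := by
  simp only [kmerAt, ht.trans d.isLt, dite_true]
  exact hxy _ ht

lemma hasPeriod_of_occAt_of_occAt (hij : i ≤ j) (hj : j + k ≤ n) (hi : occAt x w i)
    (hj' : occAt x w j) : (List.ofFn w).HasPeriod (j - i) := by
  refine hasPeriod_ofFn_iff.2 fun s t hst ↦ ?_
  have hidx : i + (t : ℕ) = j + s := by omega
  rw [← hj' s (by omega), ← hi t (by omega)]
  simp only [hidx]

end Occurrences

section IndicatorDifferences

variable {n k : ℕ} {x y : Fin n → Bool} {w : Fin k → Bool} {j : ℕ}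

/-- The difference `1[x[j : j+k-1] = w] - 1[y[j : j+k-1] = w]` of the occurrence indicators. -/
noncomputable def indDiff (x y : Fin n → Bool) (w : Fin k → Bool) (j : ℕ) : ℝ :=
  indAt x w j - indAt y w j

lemma indDiff_eq_zero_of_iff (h : occAt x w j ↔ occAt y w j) : indDiff x y w j = 0 := by
  rw [indDiff, indAt, indAt, propext h, sub_self]

lemma indDiff_eq_one (hx : occAt x w j) (hy : ¬ occAt y w j) : indDiff x y w j = 1 := by
  rw [indDiff, indAt, indAt, if_pos hx, if_neg hy, sub_zero]

lemma abs_indDiff_le_one : |indDiff x y w j| ≤ 1 := by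
  unfold indDiff indAt
  split_ifs <;> norm_num

lemma occAt_of_indDiff_neg (h : indDiff x y w j < 0) : occAt y w j := by
  contrapose! h
  unfold indDiff indAt
  split_ifs <;> norm_num

lemma Kmap_sub_Kmap (p : ℝ) (x y : Fin n → Bool) (w : Fin k → Bool) (i : ℕ) :
    Kmap p x w i - Kmap p y w i =
      ∑ j ∈ range (n - k + 1), j.choose i * p ^ (j - i) * (1 - p) ^ i * indDiff x y w j := by
  simp only [Kmap, indDiff, mul_sub, sum_sub_distrib]

lemma kmerL1_comm (p : ℝ) (k : ℕ) (x y : Fin n → Bool) : kmerL1 p k x y = kmerL1 p k y x := by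
  simp only [kmerL1, abs_sub_comm]

lemma kmerL1_nonneg (p : ℝ) (k : ℕ) (x y : Fin n → Bool) : 0 ≤ kmerL1 p k x y :=
  sum_nonneg fun _ _ ↦ sum_nonneg fun _ _ ↦ abs_nonneg _

lemma sum_abs_Kmap_sub_le_kmerL1 (p : ℝ) (x y : Fin n → Bool) (w : Fin k → Bool) :
    ∑ i ∈ range n, |Kmap p x w i - Kmap p y w i| ≤ kmerL1 p k x y :=
  single_le_sum (f := fun w : Fin k → Bool ↦ ∑ i ∈ range n, |Kmap p x w i - Kmap p y w i|)
    (fun _ _ ↦ sum_nonneg fun _ _ ↦ abs_nonneg _) (mem_univ w)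

end IndicatorDifferences

section GeneratingFunction

variable {n k : ℕ} {x y : Fin n → Bool} {w : Fin k → Bool} {m : ℕ} {p : ℝ} {z : ℂ}

/-- The polynomial `∑ i, indDiff x y w (m + i) z ^ i` over the starting positions `m + i ≤ n - k`:
the generating function of the indicator differences with its first `m` terms removed and divided
by `z ^ m`. -/
noncomputable def diffGF (x y : Fin n → Bool) (w : Fin k → Bool) (m : ℕ) (z : ℂ) : ℂ :=
  ∑ i ∈ range (n - k + 1 - m), (indDiff x y w (m + i) : ℂ) * z ^ i

lemma differentiable_diffGF (x y : Fin n → Bool) (w : Fin k → Bool) (m : ℕ) :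
    Differentiable ℂ (diffGF x y w m) := by
  unfold diffGF
  fun_prop

lemma diffGF_at_zero (hm : m ≤ n - k) : diffGF x y w m 0 = indDiff x y w m := by
  rw [diffGF, sum_eq_single_of_mem 0 (mem_range.2 (by omega)) fun i _ hi ↦ by simp [hi]]
  simp

lemma norm_diffGF_le_geom_sum (x y : Fin n → Bool) (w : Fin k → Bool) (m : ℕ) (z : ℂ) :
    ‖diffGF x y w m z‖ ≤ ∑ i ∈ range (n - k + 1 - m), ‖z‖ ^ i := by
  refine norm_sum_le_of_le _ fun i _ ↦ ?_
  rw [norm_mul, norm_pow, Complex.norm_real]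
  exact mul_le_of_le_one_left (by positivity) abs_indDiff_le_one

lemma norm_diffGF_le_inv_one_sub (x y : Fin n → Bool) (w : Fin k → Bool) (m : ℕ) (hz : ‖z‖ < 1) :
    ‖diffGF x y w m z‖ ≤ (1 - ‖z‖)⁻¹ :=
  (norm_diffGF_le_geom_sum x y w m z).trans <|
    tsum_geometric_of_lt_one (norm_nonneg z) hz ▸
      (summable_geometric_of_lt_one (norm_nonneg z) hz).sum_le_tsum _ fun _ _ ↦ by positivity

lemma norm_diffGF_le_natCast (hn : 0 < n) (hk : 0 < k) (x y : Fin n → Bool) (w : Fin k → Bool)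
    (m : ℕ) (hz : ‖z‖ = 1) : ‖diffGF x y w m z‖ ≤ n :=
  calc ‖diffGF x y w m z‖ ≤ ((n - k + 1 - m : ℕ) : ℝ) := by
        simpa [hz] using norm_diffGF_le_geom_sum x y w m z
    _ ≤ n := by exact_mod_cast (by omega : n - k + 1 - m ≤ n)

lemma diffGF_zero_eq_pow_mul (hm : m ≤ n - k) (h : ∀ j < m, indDiff x y w j = 0) (z : ℂ) :
    diffGF x y w 0 z = z ^ m * diffGF x y w m z := by
  obtain ⟨N, hN⟩ := Nat.exists_eq_add_of_le (Nat.le_succ_of_le hm)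
  simp only [Nat.succ_eq_add_one] at hN
  simp only [diffGF, hN, Nat.sub_zero, zero_add, Nat.add_sub_cancel_left, sum_range_add, mul_sum]
  rw [sum_eq_zero fun j hj ↦ by simp [h j (mem_range.1 hj)], zero_add]
  exact sum_congr rfl fun i _ ↦ by ring

lemma diffGF_zero_eq_sum_Kmap (hn : 0 < n) (hk : 0 < k) (p : ℝ) (x y : Fin n → Bool)
    (w : Fin k → Bool) (u : ℂ) :
    diffGF x y w 0 (p + (1 - p) * u) =
      ∑ i ∈ range n, ((Kmap p x w i - Kmap p y w i : ℝ) : ℂ) * u ^ i := by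
  have hbinom : ∀ j < n, (p + (1 - p) * u) ^ j =
      ∑ i ∈ range n, (j.choose i : ℂ) * p ^ (j - i) * (1 - p) ^ i * u ^ i := by
    intro j hj
    rw [add_comm, add_pow]
    refine sum_subset_zero_on_sdiff (range_subset_range.2 hj) (fun i hi ↦ ?_) fun i _ ↦ by
      rw [mul_pow]
      ring
    rw [mem_sdiff, mem_range, mem_range] at hi
    rw [Nat.choose_eq_zero_of_lt (by omega), Nat.cast_zero, zero_mul, zero_mul, zero_mul]
  simp only [Kmap_sub_Kmap, Complex.ofReal_sum, sum_mul]
  rw [sum_comm, diffGF, Nat.sub_zero]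
  refine sum_congr rfl fun j hj ↦ ?_
  rw [zero_add, hbinom j (by rw [mem_range] at hj; omega), mul_sum]
  refine sum_congr rfl fun i _ ↦ ?_
  push_cast
  ring

lemma norm_diffGF_zero_le (hn : 0 < n) (hk : 0 < k) (hp : p < 1) {U : ℝ} (hU : 1 ≤ U)
    (hz : ‖z - p‖ ≤ (1 - p) * U) : ‖diffGF x y w 0 z‖ ≤ kmerL1 p k x y * U ^ n := by
  have hq : ‖(1 - p : ℂ)‖ = 1 - p := by
    rw [← Complex.ofReal_one, ← Complex.ofReal_sub, Complex.norm_of_nonneg (sub_pos.2 hp).le]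
  have hq₀ : (1 - p : ℂ) ≠ 0 := norm_pos_iff.1 (hq ▸ sub_pos.2 hp)
  set u : ℂ := (z - p) / (1 - p)
  have hu : ‖u‖ ≤ U := by rwa [norm_div, hq, div_le_iff₀' (sub_pos.2 hp)]
  have hzu : z = p + (1 - p) * u := by rw [mul_div_cancel₀ _ hq₀, add_sub_cancel]
  calc ‖diffGF x y w 0 z‖ ≤ ∑ i ∈ range n, |Kmap p x w i - Kmap p y w i| * U ^ n := by
        rw [hzu, diffGF_zero_eq_sum_Kmap hn hk]
        refine norm_sum_le_of_le _ fun i hi ↦ ?_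
        rw [norm_mul, Complex.norm_real, norm_pow, Real.norm_eq_abs]
        gcongr
        exact (pow_le_pow_left₀ (norm_nonneg u) hu i).trans
          (pow_le_pow_right₀ hU (mem_range.1 hi).le)
    _ ≤ kmerL1 p k x y * U ^ n := by
        rw [← sum_mul]
        gcongr
        exact sum_abs_Kmap_sub_le_kmerL1 p x y w

lemma pow_mul_norm_diffGF_le (hn : 0 < n) (hk : 0 < k) (hp : p < 1) (hm : m ≤ n - k)
    (h : ∀ j < m, indDiff x y w j = 0) {U : ℝ} (hU : 1 ≤ U) (hz : ‖z - p‖ ≤ (1 - p) * U) :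
    ‖z‖ ^ m * ‖diffGF x y w m z‖ ≤ kmerL1 p k x y * U ^ n := by
  rw [← norm_pow, ← norm_mul, ← diffGF_zero_eq_pow_mul hm h]
  exact norm_diffGF_zero_le hn hk hp hU hz

end GeneratingFunction

section UpperBounds

variable {p : ℝ}

lemma norm_ofReal_mul_sub_ofReal_le {a b : ℝ} (ha : 0 ≤ a) (hba : b ≤ a) (v : ℂ) :
    ‖a * v - b‖ ≤ a * ‖v - 1‖ + (a - b) :=
  calc ‖a * v - b‖ = ‖(a : ℂ) * (v - 1) + ((a - b : ℝ) : ℂ)‖ := by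
        congr 1
        push_cast
        ring
    _ ≤ ‖(a : ℂ) * (v - 1)‖ + ‖((a - b : ℝ) : ℂ)‖ := norm_add_le _ _
    _ = a * ‖v - 1‖ + (a - b) := by
        rw [norm_mul, Complex.norm_of_nonneg ha, Complex.norm_of_nonneg (sub_nonneg.2 hba)]

lemma exists_pos_mul_pow_le_kmerL1 (hp₀ : 0 ≤ p) (hp₁ : p < 1) :
    ∃ c : ℝ, 0 < c ∧ ∀ {n k : ℕ} (x y : Fin n → Bool) (w : Fin k → Bool) {m : ℕ}, 0 < n → 0 < k →
      m ≤ n - k → (∀ j < m, indDiff x y w j = 0) → indDiff x y w m = 1 →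
      c * ((1 + p) / 2) ^ m ≤ kmerL1 p k x y := by
  set ρ : ℝ := (1 + p) / 2 with hρ
  have hρ₀ : 0 < ρ := by positivity
  have hρ₁ : ρ < 1 := by linarith
  have norm_ρ_mul : ∀ v : ℂ, ‖v‖ = 1 → ‖ρ * v‖ = ρ := fun v hv ↦ by
    rw [norm_mul, hv, mul_one, Complex.norm_of_nonneg hρ₀.le]
  obtain ⟨M, hM⟩ := exists_nat_gt (Real.pi / (1 - ρ))
  have hM₀ : 0 < M := by
    exact_mod_cast (div_pos Real.pi_pos (sub_pos.2 hρ₁)).trans hM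
  have hMρ : Real.pi / M ≤ 1 - ρ := by
    rw [div_le_comm₀ (by exact_mod_cast hM₀) (sub_pos.2 hρ₁)]
    exact hM.le
  set B : ℝ := (1 - ρ)⁻¹
  have hB : 0 < B := inv_pos.2 (sub_pos.2 hρ₁)
  refine ⟨(B ^ (M - 1))⁻¹, inv_pos.2 (pow_pos hB _), fun {n k} x y w {m} hn hk hm hlow hone ↦ ?_⟩
  have hnear : ∀ v : ℂ, ‖v‖ = 1 → ‖v - 1‖ ≤ Real.pi / M →
      ‖diffGF x y w m (ρ * v)‖ ≤ kmerL1 p k x y / ρ ^ m := by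
    intro v hv hv₁
    have hdist : ‖ρ * v - p‖ ≤ (1 - p) * 1 :=
      calc ‖ρ * v - p‖ ≤ ρ * ‖v - 1‖ + (ρ - p) :=
            norm_ofReal_mul_sub_ofReal_le hρ₀.le (by linarith) v
        _ ≤ 1 * (1 - ρ) + (ρ - p) := by gcongr; exact hv₁.trans hMρ
        _ = (1 - p) * 1 := by ring
    have hpow := pow_mul_norm_diffGF_le hn hk hp₁ hm hlow le_rfl hdist
    rwa [norm_ρ_mul v hv, one_pow, mul_one, ← le_div_iff₀' (by positivity)] at hpow
  have hcircle : ∀ v : ℂ, ‖v‖ = 1 → ‖diffGF x y w m (ρ * v)‖ ≤ B := fun v hv ↦ by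
    simpa only [norm_ρ_mul v hv] using
      norm_diffGF_le_inv_one_sub x y w m ((norm_ρ_mul v hv).trans_lt hρ₁)
  have hdiff : Differentiable ℂ fun v : ℂ ↦ diffGF x y w m (ρ * v) :=
    (differentiable_diffGF x y w m).comp (differentiable_id.const_mul _)
  have key := norm_apply_zero_pow_le_of_norm_le_near_one hdiff.diffContOnCl hM₀ hcircle hnear
  rw [mul_zero, diffGF_at_zero hm, hone, Complex.ofReal_one, norm_one, one_pow,
    div_mul_eq_mul_div, le_div_iff₀ (by positivity), one_mul] at key
  rwa [inv_mul_le_iff₀ (by positivity), mul_comm]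

lemma norm_sub_ofReal_le_mul_exp (hp₀ : 0 ≤ p) (hp₁ : p < 1) {v : ℂ} {a : ℝ} (hv : ‖v‖ = 1)
    (hva : ‖v - 1‖ ≤ a) :
    ‖v - p‖ ≤ (1 - p) * Real.exp (p / (2 * (1 - p) ^ 2) * a ^ 2) := by
  have hq : 0 < 1 - p := sub_pos.2 hp₁
  have hvv : v.re * v.re + v.im * v.im = 1 := by
    rw [← Complex.normSq_apply, ← Complex.sq_norm, hv, one_pow]
  have hsq : ‖v - p‖ ^ 2 = (1 - p) ^ 2 + p * ‖v - 1‖ ^ 2 := by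
    simp only [Complex.sq_norm, Complex.normSq_apply, Complex.sub_re, Complex.sub_im,
      Complex.ofReal_re, Complex.ofReal_im, Complex.one_re, Complex.one_im]
    linear_combination (1 - p) * hvv
  refine (sq_le_sq₀ (norm_nonneg _) (by positivity)).1 ?_
  calc ‖v - p‖ ^ 2 ≤ (1 - p) ^ 2 + p * a ^ 2 := by rw [hsq]; gcongr
    _ = (1 - p) ^ 2 * (2 * (p / (2 * (1 - p) ^ 2) * a ^ 2) + 1) := by
        field_simp
        ring
    _ ≤ (1 - p) ^ 2 * Real.exp (2 * (p / (2 * (1 - p) ^ 2) * a ^ 2)) := by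
        gcongr
        exact Real.add_one_le_exp _
    _ = ((1 - p) * Real.exp (p / (2 * (1 - p) ^ 2) * a ^ 2)) ^ 2 := by
        rw [mul_pow, ← Real.exp_nat_mul, Nat.cast_ofNat]

lemma norm_diffGF_ofReal_pow_le (hp₀ : 0 ≤ p) (hp₁ : p < 1) {n k m M : ℕ} {x y : Fin n → Bool}
    {w : Fin k → Bool} (hn : 0 < n) (hk : 0 < k) (hm : m ≤ n - k)
    (hlow : ∀ j < m, indDiff x y w j = 0) (hM : 4 ≤ M) {r : ℝ} (hr₀ : 0 ≤ r) (hr₁ : r < 1) :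
    ‖diffGF x y w m r‖ ^ M ≤ kmerL1 p k x y *
      Real.exp (n * (p / (2 * (1 - p) ^ 2) * ((1 - r) * (Real.pi / M)) ^ 2)) * n ^ (M - 1) := by
  refine norm_apply_ofReal_pow_le_of_norm_le_near_one
    (differentiable_diffGF x y w m).diffContOnCl hM hr₀ hr₁
    (fun z hz ↦ norm_diffGF_le_natCast hn hk x y w m hz) fun z hz hz₁ ↦ ?_
  have h := pow_mul_norm_diffGF_le (x := x) (y := y) hn hk hp₁ hm hlow
    (Real.one_le_exp (by positivity)) (norm_sub_ofReal_le_mul_exp hp₀ hp₁ hz hz₁)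
  rwa [hz, one_pow, one_mul, ← Real.exp_nat_mul] at h

end UpperBounds

section LowerBounds

lemma one_sub_sub_le_sum_mul_pow {c : ℕ → ℝ} {N l : ℕ} {r : ℝ} (hN : 0 < N) (hr₀ : 0 ≤ r)
    (hr₁ : r ≤ 1) (hc₀ : c 0 = 1) (hc : ∀ i, -1 ≤ c i)
    (hsep : ∀ i j, 0 < i → i < j → j ≤ l → j < N → c i < 0 → 0 ≤ c j) :
    1 - r - N * r ^ l ≤ ∑ i ∈ range N, c i * r ^ i := by
  set neg : Finset ℕ := {i ∈ range N | 0 < i ∧ i ≤ l ∧ c i < 0}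
  have mem_neg : ∀ {i}, i ∈ neg ↔ i < N ∧ 0 < i ∧ i ≤ l ∧ c i < 0 := by simp [neg]
  have card_neg : #neg ≤ 1 := by
    refine card_le_one_iff.2 fun {i j} hi hj ↦ ?_
    obtain ⟨hiN, hi₀, hil, hci⟩ := mem_neg.1 hi
    obtain ⟨hjN, hj₀, hjl, hcj⟩ := mem_neg.1 hj
    rcases lt_trichotomy i j with h | h | h
    · exact absurd (hsep i j hi₀ h hjl hjN hci) hcj.not_ge
    · exact h
    · exact absurd (hsep j i hj₀ h hil hiN hcj) hci.not_ge
  have hterm : ∀ i ∈ range N,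
      (if i = 0 then 1 else 0) - (if i ∈ neg then r else 0) - r ^ l ≤ c i * r ^ i := by
    intro i hi
    rcases eq_or_ne i 0 with rfl | hi₀
    · simp [mem_neg, hc₀, pow_nonneg hr₀ l]
    have hri : 0 ≤ r ^ i := pow_nonneg hr₀ i
    have hrl : 0 ≤ r ^ l := pow_nonneg hr₀ l
    have hlower : -r ^ i ≤ c i * r ^ i := by nlinarith [hc i]
    rw [if_neg hi₀]
    split_ifs with hneg
    · linarith [pow_le_of_le_one hr₀ hr₁ hi₀]
    · rcases lt_or_ge l i with hil | hil
      · linarith [pow_le_pow_of_le_one hr₀ hr₁ hil.le]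
      · have hci : 0 ≤ c i := not_lt.1 fun h ↦
          hneg (mem_neg.2 ⟨mem_range.1 hi, Nat.pos_of_ne_zero hi₀, hil, h⟩)
        linarith [mul_nonneg hci hri]
  have hneg_sum : ∑ i ∈ range N, (if i ∈ neg then r else 0) ≤ r := by
    rw [← sum_filter, sum_const, nsmul_eq_mul]
    refine mul_le_of_le_one_left hr₀ (Nat.cast_le_one.2 (le_trans ?_ card_neg))
    exact card_le_card fun i hi ↦ (mem_filter.1 hi).2
  have hsum := sum_le_sum hterm
  rw [sum_sub_distrib, sum_sub_distrib, sum_ite_eq', if_pos (mem_range.2 hN), sum_const,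
    card_range, nsmul_eq_mul] at hsum
  linarith

-- Occurrences of an aperiodic `w` in `y` are far apart, so at most one of the first `l`
-- coefficients after the leading `1` is negative.
lemma one_sub_sub_le_norm_diffGF {n k m l : ℕ} {x y : Fin n → Bool} {w : Fin k → Bool}
    (hk : 0 < k) (hmk : m + k ≤ n) (hx : occAt x w m) (hy : ¬ occAt y w m)
    (hw : ∀ a, 0 < a → a ≤ l → ¬ (List.ofFn w).HasPeriod a) {r : ℝ} (hr₀ : 0 ≤ r) (hr₁ : r ≤ 1) :
    1 - r - n * r ^ l ≤ ‖diffGF x y w m r‖ := by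
  have hsep : ∀ i j, 0 < i → i < j → j ≤ l → j < n - k + 1 - m →
      indDiff x y w (m + i) < 0 → 0 ≤ indDiff x y w (m + j) := by
    intro i j _ hij hjl hj hi
    by_contra! hj'
    refine hw (m + j - (m + i)) (by omega) (by omega) ?_
    exact hasPeriod_of_occAt_of_occAt (by omega) (by omega) (occAt_of_indDiff_neg hi)
      (occAt_of_indDiff_neg hj')
  calc 1 - r - n * r ^ l ≤ 1 - r - (n - k + 1 - m : ℕ) * r ^ l := by gcongr; omega
    _ ≤ ∑ i ∈ range (n - k + 1 - m), indDiff x y w (m + i) * r ^ i :=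
        one_sub_sub_le_sum_mul_pow (c := fun i ↦ indDiff x y w (m + i)) (by omega) hr₀ hr₁
          (indDiff_eq_one hx hy) (fun _ ↦ neg_le_of_abs_le abs_indDiff_le_one) hsep
    _ ≤ ‖((∑ i ∈ range (n - k + 1 - m), indDiff x y w (m + i) * r ^ i : ℝ) : ℂ)‖ := by
        rw [Complex.norm_real]
        exact Real.le_norm_self _
    _ = ‖diffGF x y w m r‖ := by
        rw [diffGF]
        push_cast
        rfl

end LowerBounds

section Parameters

variable {t s L : ℝ}

lemma inv_le_sub_mul_pow_of_log_lt {l : ℕ} (ht : 0 < t) (hlog : 1 ≤ Real.log t)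
    (hlogL : 4 * Real.log t < L) (hLt : L ≤ t) (hl : L / 2 ≤ l) :
    t⁻¹ ≤ 4 * Real.log t / L - t * (1 - 4 * Real.log t / L) ^ l := by
  have hL : 0 < L := by linarith
  set δ : ℝ := 4 * Real.log t / L with hδ
  have hδ₁ : δ < 1 := (div_lt_one hL).2 hlogL
  have hδl : 2 * Real.log t ≤ l * δ :=
    calc 2 * Real.log t = L / 2 * δ := by rw [hδ]; field_simp; norm_num
      _ ≤ l * δ := by gcongr
  have hpow : (1 - δ) ^ l ≤ (t ^ 2)⁻¹ :=
    calc (1 - δ) ^ l ≤ Real.exp (-δ) ^ l :=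
          pow_le_pow_left₀ (sub_nonneg.2 hδ₁.le) (Real.one_sub_le_exp_neg δ) l
      _ = Real.exp (-(l * δ)) := by rw [← Real.exp_nat_mul, mul_neg]
      _ ≤ Real.exp (-(2 * Real.log t)) := by gcongr
      _ = (t ^ 2)⁻¹ := by
          rw [Real.exp_neg, two_mul, Real.exp_add, Real.exp_log ht, sq]
  have htail : t * (1 - δ) ^ l ≤ t⁻¹ :=
    calc t * (1 - δ) ^ l ≤ t * (t ^ 2)⁻¹ := by gcongr
      _ = t⁻¹ := by field_simp
  have hlead : 2 * t⁻¹ ≤ δ := by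
    rw [← div_eq_mul_inv, div_le_div_iff₀ ht hL]
    nlinarith
  linarith

lemma exists_nat_pi_div_le (hs : 1 ≤ s) (hL : 1 ≤ L) :
    ∃ M : ℕ, 4 ≤ M ∧ M ≤ 14 * (L * s) ∧ 4 * s / L * (Real.pi / M) ≤ (L ^ 2)⁻¹ := by
  have hLs : 1 ≤ L * s := one_le_mul_of_one_le_of_one_le hL hs
  have hM : 13 * (L * s) ≤ ⌈13 * (L * s)⌉₊ := Nat.le_ceil _
  refine ⟨⌈13 * (L * s)⌉₊, ?_, ?_, ?_⟩
  · exact_mod_cast (by linarith : (4 : ℝ) ≤ 13 * (L * s)).trans hM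
  · linarith [Nat.ceil_lt_add_one (by positivity : 0 ≤ 13 * (L * s))]
  · calc 4 * s / L * (Real.pi / ⌈13 * (L * s)⌉₊) ≤ 4 * s / L * (3.25 / (13 * (L * s))) := by
          gcongr
          linarith [Real.pi_lt_d2]
      _ = (L ^ 2)⁻¹ := by
          field_simp
          norm_num

lemma exists_pos_forall_exp_neg_mul_le {c : ℝ} (hc : 0 < c) :
    ∃ A : ℝ, 0 < A ∧ ∀ n : ℕ, 2 ≤ n →
      Real.exp (-(A * (n : ℝ) ^ ((1 : ℝ) / 5) * Real.log n ^ 2)) ≤ c := by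
  refine ⟨4 * (|Real.log c| + 1), by positivity, fun n hn ↦ ?_⟩
  have hn' : (2 : ℝ) ≤ n := by exact_mod_cast hn
  have hL : 1 ≤ (n : ℝ) ^ ((1 : ℝ) / 5) := Real.one_le_rpow (by linarith) (by norm_num)
  have hlog : 1 / 2 ≤ Real.log n := by
    linarith [Real.log_two_gt_d9, Real.log_le_log two_pos hn']
  have hone : 1 ≤ (n : ℝ) ^ ((1 : ℝ) / 5) * (4 * Real.log n ^ 2) :=
    one_le_mul_of_one_le_of_one_le hL (by nlinarith)
  rw [← Real.le_log_iff_exp_le hc]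
  nlinarith [neg_abs_le (Real.log c), abs_nonneg (Real.log c)]

lemma log_sq_le_eight_mul_log_pow_five {n : ℕ} (hn : 2 ≤ n) :
    Real.log n ^ 2 ≤ 8 * Real.log n ^ 5 := by
  have hlog : 1 / 2 ≤ Real.log n := by
    linarith [Real.log_two_gt_d9, Real.log_le_log two_pos (by exact_mod_cast hn : (2 : ℝ) ≤ n)]
  calc Real.log n ^ 2 ≤ Real.log n ^ 2 * (2 * Real.log n) ^ 3 :=
        le_mul_of_one_le_right (sq_nonneg _) (one_le_pow₀ (by linarith))
    _ = 8 * Real.log n ^ 5 := by ring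

lemma eventually_four_mul_log_lt_rpow :
    ∀ᶠ n : ℕ in Filter.atTop, 1 ≤ Real.log n ∧ 4 * Real.log n < (n : ℝ) ^ ((1 : ℝ) / 5) := by
  have hlittle := (isLittleO_log_rpow_atTop (by norm_num : (0 : ℝ) < 1 / 5)).bound
    (by norm_num : (0 : ℝ) < 1 / 5)
  refine tendsto_natCast_atTop_atTop.eventually (p := fun t : ℝ ↦
    1 ≤ Real.log t ∧ 4 * Real.log t < t ^ ((1 : ℝ) / 5)) ?_
  filter_upwards [hlittle, Real.tendsto_log_atTop.eventually_ge_atTop 1,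
    Filter.eventually_ge_atTop 0] with t ht hlog ht₀
  rw [Real.norm_of_nonneg (by linarith), Real.norm_of_nonneg (by positivity)] at ht
  exact ⟨hlog, by linarith⟩

end Parameters

section KmerDistance

variable {p : ℝ} {n k : ℕ} {x y : Fin n → Bool} {d : Fin n}

lemma exp_neg_le_kmerL1_of_inv_le (hp₀ : 0 ≤ p) (hp₁ : p < 1) {m M : ℕ} {w : Fin k → Bool}
    (hn : 0 < n) (hk : 0 < k) (hm : m ≤ n - k) (hlow : ∀ j < m, indDiff x y w j = 0)
    (hM : 4 ≤ M) {r : ℝ} (hr₀ : 0 ≤ r) (hr₁ : r < 1)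
    (hr : (n : ℝ)⁻¹ ≤ ‖diffGF x y w m r‖) :
    Real.exp (-(n * (p / (2 * (1 - p) ^ 2) * ((1 - r) * (Real.pi / M)) ^ 2) +
      2 * (M * Real.log n))) ≤ kmerL1 p k x y := by
  set E : ℝ := n * (p / (2 * (1 - p) ^ 2) * ((1 - r) * (Real.pi / M)) ^ 2)
  have hn' : (0 : ℝ) < n := Nat.cast_pos.2 hn
  have hK := kmerL1_nonneg p k x y
  have key : ((n : ℝ)⁻¹) ^ M ≤ kmerL1 p k x y * (Real.exp E * n ^ M) :=
    calc ((n : ℝ)⁻¹) ^ M ≤ ‖diffGF x y w m r‖ ^ M := pow_le_pow_left₀ (by positivity) hr M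
      _ ≤ kmerL1 p k x y * Real.exp E * n ^ (M - 1) :=
          norm_diffGF_ofReal_pow_le hp₀ hp₁ hn hk hm hlow hM hr₀ hr₁
      _ ≤ kmerL1 p k x y * Real.exp E * n ^ M := by
          gcongr
          · exact_mod_cast hn
          · exact Nat.sub_le M 1
      _ = kmerL1 p k x y * (Real.exp E * n ^ M) := mul_assoc _ _ _
  have hexp : Real.exp (M * Real.log n) = n ^ M := by rw [Real.exp_nat_mul, Real.exp_log hn']
  calc Real.exp (-(E + 2 * (M * Real.log n)))
      = ((n : ℝ)⁻¹) ^ M / (Real.exp E * n ^ M) := by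
        rw [inv_pow, ← hexp, ← Real.exp_neg, ← Real.exp_add, ← Real.exp_sub]
        congr 1
        ring
    _ ≤ kmerL1 p k x y := by rwa [div_le_iff₀ (by positivity)]

lemma exp_neg_le_kmerL1_of_not_hasPeriod (hp₀ : 0 ≤ p) (hp₁ : p < 1) (hlog : 1 ≤ Real.log n)
    (hlarge : 4 * Real.log n < (n : ℝ) ^ ((1 : ℝ) / 5)) (hk : 2 * (n : ℝ) ^ ((1 : ℝ) / 5) ≤ k)
    (hkd : k ≤ d + 1) (hxy : ∀ i < d, x i = y i) (hd : x d ≠ y d)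
    (hper : ∀ a, 0 < a → a ≤ (k - 1) / 2 →
      ¬ (List.ofFn (kmerAt x k (d + 1 - k))).HasPeriod a) :
    Real.exp (-((28 + p / (2 * (1 - p) ^ 2)) * (n : ℝ) ^ ((1 : ℝ) / 5) * Real.log n ^ 2)) ≤
      kmerL1 p k x y := by
  set L : ℝ := (n : ℝ) ^ ((1 : ℝ) / 5)
  set m : ℕ := d + 1 - k
  have hL : 1 ≤ L := by linarith
  have hL5 : L ^ 5 = n := by
    rw [← Real.rpow_natCast, ← Real.rpow_mul n.cast_nonneg]
    norm_num
  have hLn : L ≤ n := hL5 ▸ le_self_pow₀ hL (by norm_num)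
  have hn : 0 < n := d.pos
  have hk₀ : 0 < k := by exact_mod_cast (by linarith : (0 : ℝ) < k)
  have hlL : L / 2 ≤ ((k - 1) / 2 : ℕ) := by
    have hkl : (k : ℝ) ≤ 2 * ((k - 1) / 2 : ℕ) + 2 := by
      exact_mod_cast (by omega : k ≤ 2 * ((k - 1) / 2) + 2)
    linarith
  have hδ : 4 * Real.log n / L < 1 := (div_lt_one (by linarith)).2 hlarge
  have hδ₀ : 0 < 4 * Real.log n / L := by positivity
  have hinv : (n : ℝ)⁻¹ ≤ ‖diffGF x y (kmerAt x k m) m (1 - 4 * Real.log n / L : ℝ)‖ := by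
    refine (inv_le_sub_mul_pow_of_log_lt (by positivity) hlog hlarge hLn hlL).trans ?_
    have h := one_sub_sub_le_norm_diffGF hk₀ (by omega) (occAt_kmerAt x k m)
      (not_occAt_kmerAt_of_ne hd (by omega) (by omega)) hper (sub_nonneg.2 hδ.le)
      (sub_le_self 1 hδ₀.le)
    rwa [sub_sub_cancel] at h
  obtain ⟨M, hM4, hM, harc⟩ := exists_nat_pi_div_le hlog hL
  refine le_trans (Real.exp_le_exp.2 (neg_le_neg ?_)) <|
    exp_neg_le_kmerL1_of_inv_le hp₀ hp₁ hn hk₀ (by omega)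
      (fun j hj ↦ indDiff_eq_zero_of_iff (occAt_congr_of_add_le hxy (by omega))) hM4
      (sub_nonneg.2 hδ.le) (sub_lt_self 1 hδ₀) hinv
  rw [sub_sub_cancel]
  set q : ℝ := p / (2 * (1 - p) ^ 2)
  calc n * (q * (4 * Real.log n / L * (Real.pi / M)) ^ 2) + 2 * (M * Real.log n)
      ≤ n * (q * ((L ^ 2)⁻¹) ^ 2) + 2 * (14 * (L * Real.log n) * Real.log n) := by gcongr
    _ = q * L + 28 * L * Real.log n ^ 2 := by
        rw [← hL5]
        field_simp
        ring
    _ ≤ q * L * Real.log n ^ 2 + 28 * L * Real.log n ^ 2 := by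
        gcongr ?_ + _
        exact le_mul_of_one_le_right (by positivity) (one_le_pow₀ hlog)
    _ = (28 + q) * L * Real.log n ^ 2 := by ring

-- The `k`-mers of `x` and `y` ending at the first difference `d` differ only in their last letter,
-- so they cannot both have a short period, and `x` and `y` play symmetric roles.
lemma exp_neg_le_kmerL1_of_four_mul_log_lt (hp₀ : 0 ≤ p) (hp₁ : p < 1) (hlog : 1 ≤ Real.log n)
    (hlarge : 4 * Real.log n < (n : ℝ) ^ ((1 : ℝ) / 5)) (hk : 2 * (n : ℝ) ^ ((1 : ℝ) / 5) ≤ k)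
    (hkd : k ≤ d + 1) (hxy : ∀ i < d, x i = y i) (hd : x d ≠ y d) :
    Real.exp (-((28 + p / (2 * (1 - p) ^ 2)) * (n : ℝ) ^ ((1 : ℝ) / 5) * Real.log n ^ 2)) ≤
      kmerL1 p k x y := by
  by_cases hx : ∀ a, 0 < a → a ≤ (k - 1) / 2 →
      ¬ (List.ofFn (kmerAt x k (d + 1 - k))).HasPeriod a
  · exact exp_neg_le_kmerL1_of_not_hasPeriod hp₀ hp₁ hlog hlarge hk hkd hxy hd hx
  push Not at hx
  obtain ⟨a, ha, hak, hpa⟩ := hx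
  rw [kmerL1_comm]
  refine exp_neg_le_kmerL1_of_not_hasPeriod hp₀ hp₁ hlog hlarge hk hkd
    (fun i hi ↦ (hxy i hi).symm) hd.symm fun b hb hbk hpb ↦ ?_
  have heq : kmerAt x k (d + 1 - k) = kmerAt y k (d + 1 - k) :=
    eq_of_hasPeriod_of_forall_ne_last ha hb (by omega) hpa hpb
      fun t ht ↦ kmerAt_eq_of_add_lt hxy (by omega)
  exact not_occAt_kmerAt_of_ne hd (m := d + 1 - k) (by omega) (by omega)
    (heq ▸ occAt_kmerAt y k _)

theorem stmt_0_general (p : ℝ) (hp0 : 0 ≤ p) (hp1 : p < 1) :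
    ∃ C : ℝ, 0 < C ∧ ∀ n k : ℕ, 2 ≤ n → 2 * (n : ℝ) ^ ((1 : ℝ) / 5) ≤ k →
      ∀ x y : Fin n → Bool, x ≠ y →
        Real.exp (-(C * (n : ℝ) ^ ((1 : ℝ) / 5) * Real.log n ^ 2)) ≤ kmerL1 p k x y := by
  obtain ⟨n₀, hn₀⟩ := Filter.eventually_atTop.1 eventually_four_mul_log_lt_rpow
  obtain ⟨c, hc, hcK⟩ := exists_pos_mul_pow_le_kmerL1 hp0 hp1
  obtain ⟨A, hA, hAc⟩ :=
    exists_pos_forall_exp_neg_mul_le (by positivity : 0 < c * ((1 + p) / 2) ^ n₀)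
  refine ⟨max A (28 + p / (2 * (1 - p) ^ 2)), lt_max_of_lt_left hA,
    fun n k hn hk x y hxy ↦ ?_⟩
  obtain ⟨d, hd, hmin⟩ := wellFounded_lt.has_min {i | x i ≠ y i} (Function.ne_iff.1 hxy)
  have hagree : ∀ i < d, x i = y i := fun i hi ↦ not_not.1 fun h ↦ hmin i h hi
  by_cases hlarge : n₀ ≤ n ∧ k ≤ d + 1
  · obtain ⟨hlog, hlogL⟩ := hn₀ n hlarge.1
    refine le_trans ?_ <| exp_neg_le_kmerL1_of_four_mul_log_lt hp0 hp1 hlog hlogL hk hlarge.2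
      hagree hd
    gcongr
    exact le_max_right _ _
  have hk₀ : 0 < k := by
    exact_mod_cast (by positivity : 0 < 2 * (n : ℝ) ^ ((1 : ℝ) / 5)).trans_le hk
  have hsmall := hcK x y (kmerAt x k (d + 1 - k)) d.pos hk₀ (by omega)
    (fun j hj ↦ indDiff_eq_zero_of_iff (occAt_congr_of_add_le hagree (by omega)))
    (indDiff_eq_one (occAt_kmerAt x k _) (not_occAt_kmerAt_of_ne hd (by omega) (by omega)))
  calc Real.exp (-(max A (28 + p / (2 * (1 - p) ^ 2)) * (n : ℝ) ^ ((1 : ℝ) / 5) * Real.log n ^ 2))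
      ≤ Real.exp (-(A * (n : ℝ) ^ ((1 : ℝ) / 5) * Real.log n ^ 2)) := by
        gcongr
        exact le_max_left _ _
    _ ≤ c * ((1 + p) / 2) ^ n₀ := hAc n hn
    _ ≤ c * ((1 + p) / 2) ^ (d + 1 - k : ℕ) := by
        gcongr ?_ * ?_
        exact pow_le_pow_of_le_one (by positivity) (by linarith) (by omega)
    _ ≤ kmerL1 p k x y := hsmall

end KmerDistance

/-- For every deletion probability `p ∈ [0,1)` there is a constant `C > 0`
(depending only on `p`) such that for every `n ≥ 2`, with `k = ⌈2 n^{1/5}⌉`, for all distinct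
`x, y ∈ {0,1}^n` we have `‖K_x - K_y‖₁ ≥ exp(-C n^{1/5} (log n)^5)`. -/
theorem stmt_0 (p : ℝ) (hp0 : 0 ≤ p) (hp1 : p < 1) :
    ∃ C : ℝ, 0 < C ∧ ∀ n : ℕ, 2 ≤ n →
      ∀ x y : Fin n → Bool, x ≠ y →
        Real.exp (-(C * (n : ℝ) ^ ((1 : ℝ)/5) * (Real.log n) ^ 5)) ≤
          kmerL1 p (⌈2 * (n : ℝ) ^ ((1 : ℝ)/5)⌉₊) x y := by
  obtain ⟨C, hC, h⟩ := stmt_0_general p hp0 hp1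
  refine ⟨C * 8, by positivity, fun n hn x y hxy ↦ le_trans ?_ (h n _ hn (Nat.le_ceil _) x y hxy)⟩
  rw [Real.exp_le_exp, neg_le_neg_iff, mul_right_comm C 8, mul_assoc _ 8]
  gcongr
  exact log_sq_le_eight_mul_log_pow_five hn
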